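/- For every x ∈ L the following are equivalent: (1) x = 0_L; (2) ∅ ⊢ {(x, 0_B)}; (3) {(x, 1_B)} ⊢ ∅. Dually, for every x ∈ L the following are equivalent: (1') x = 1_L; (2') ∅ ⊢ {(x, 1_B)}; (3') {(x, 0_B)} ⊢ ∅. -/

import Mathlib

/-- An entailment relation on a set `S`: a relation between finite subsets of `S`
satisfying reflexivity (R), monotonicity (M) and transitivity/cut (T). -/
def IsEntailment {S : Type*} [DecidableEq S] (E : Finset S → Finset S → Prop) : Prop :=
  (∀ X Y : Finset S, (∃ x, x ∈ X ∧ x ∈ Y) → E X Y) ∧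
  (∀ X X' Y Y' : Finset S, E X Y → E (X ∪ X') (Y ∪ Y')) ∧
  (∀ X Y : Finset S, ∀ z : S, E X (insert z Y) → E (insert z X) Y → E X Y)

variable (M : Type*) (D : Type*) [Lattice M] [BoundedOrder M] [Lattice D] [BoundedOrder D]
  [Fintype D] [DecidableEq M] [DecidableEq D]

/-- The generating axioms (s), (∧), (∨), (0), (1), (t) for the entailment relation
of `D`-valued lattice maps on `M`. -/
def LatticeAxioms : Finset (M × D) → Finset (M × D) → Prop := fun X Y =>
  (∃ x a b, a ≠ b ∧ X = {(x, a), (x, b)} ∧ Y = ∅) ∨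
  (∃ x y a b, X = {(x, a), (y, b)} ∧ Y = {(x ⊓ y, a ⊓ b)}) ∨
  (∃ x y a b, X = {(x, a), (y, b)} ∧ Y = {(x ⊔ y, a ⊔ b)}) ∨
  (X = ∅ ∧ Y = {((⊥ : M), (⊥ : D))}) ∨
  (X = ∅ ∧ Y = {((⊤ : M), (⊤ : D))}) ∨
  (∃ x : M, X = ∅ ∧ Y = Finset.univ.image (fun a : D => (x, a)))

/-- The least entailment relation on `M × D` containing all the generating axioms:
the entailment relation of `D`-valued lattice maps on `M`. -/
def LatticeEntails (X Y : Finset (M × D)) : Prop :=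
  ∀ E : Finset (M × D) → Finset (M × D) → Prop,
    IsEntailment E → (∀ X' Y', LatticeAxioms M D X' Y' → E X' Y') → E X Y

/-!
Both triples are closed up as a cycle (1) ⇒ (2) ⇒ (3) ⇒ (1). The first implication is an axiom and
the second a cut against axiom (s). The third is semantic: a bounded lattice homomorphism `f` is a
model of the entailment relation under the reading `(x, a) ↦ (f x = a)`, so `{(x, ⊤)} ⊢ ∅` means
that no `f` takes the value `⊤` at `x`, whereas for `x ≠ ⊥` the prime ideal theorem provides a
two-valued homomorphism that does.
-/

section Entailment

variable {S : Type*} [DecidableEq S]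

theorem IsEntailment.mono {E : Finset S → Finset S → Prop} (hE : IsEntailment E)
    {X X' Y Y' : Finset S} (h : E X Y) (hX : X ⊆ X') (hY : Y ⊆ Y') : E X' Y' := by
  simpa only [Finset.union_eq_right.2 hX, Finset.union_eq_right.2 hY] using hE.2.1 X X' Y Y' h

theorem isEntailment_forall_imp_exists (P : S → Prop) :
    IsEntailment fun X Y : Finset S => (∀ s ∈ X, P s) → ∃ s ∈ Y, P s := by
  refine ⟨?_, ?_, ?_⟩
  · rintro X Y ⟨s, hsX, hsY⟩ hX
    exact ⟨s, hsY, hX s hsX⟩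
  · intro X X' Y Y' h hX
    obtain ⟨s, hsY, hs⟩ := h fun s hsX => hX s (Finset.mem_union_left X' hsX)
    exact ⟨s, Finset.mem_union_left Y' hsY, hs⟩
  · intro X Y z hright hleft hX
    obtain ⟨s, hsY, hs⟩ := hright hX
    rcases Finset.mem_insert.1 hsY with rfl | hsY
    · exact hleft (Finset.forall_mem_insert _ _ _ |>.2 ⟨hs, hX⟩)
    · exact ⟨s, hsY, hs⟩

end Entailment

section PrimeIdeal

open Order

open Classical in
/-- The two-valued homomorphism of a prime ideal `J`: it sends `J` to `⊥` and the complementary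
prime filter to `⊤`. The values are taken in an arbitrary bounded lattice `B`, so that the
homomorphism is a model of the entailment relation on `L × B`. -/
noncomputable def primeIdealHom {L : Type*} [Lattice L] [BoundedOrder L] (B : Type*)
    [Lattice B] [BoundedOrder B] (J : Ideal L) [hJ : J.IsPrime] : BoundedLatticeHom L B where
  toFun x := if x ∈ J then ⊥ else ⊤
  map_sup' x y := by
    by_cases hx : x ∈ J <;> by_cases hy : y ∈ J <;> simp [hx, hy]
  map_inf' x y := by
    have hmem : x ⊓ y ∈ J ↔ x ∈ J ∨ y ∈ J :=
      ⟨hJ.mem_or_mem, fun h => h.elim (J.lower inf_le_left) (J.lower inf_le_right)⟩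
    by_cases hx : x ∈ J <;> by_cases hy : y ∈ J <;> simp [hmem, hx, hy]
  map_top' := if_neg hJ.top_notMem
  map_bot' := if_pos J.bot_mem

theorem exists_boundedLatticeHom_eq_top_eq_bot {L B : Type*} [DistribLattice L] [BoundedOrder L]
    [Lattice B] [BoundedOrder B] {x y : L} (h : ¬x ≤ y) :
    ∃ f : BoundedLatticeHom L B, f x = ⊤ ∧ f y = ⊥ := by
  have hdisj : Disjoint (PFilter.principal x : Set L) (Ideal.principal y) :=
    Set.disjoint_left.2 fun _ hxz hzy => h (le_trans hxz hzy)
  obtain ⟨J, hJ, hyJ, hxJ⟩ := DistribLattice.prime_ideal_of_disjoint_filter_ideal hdisj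
  have hx : x ∉ J := Set.disjoint_left.1 hxJ (PFilter.mem_principal.2 le_rfl)
  have hy : y ∈ J := hyJ Ideal.mem_principal_self
  exact ⟨primeIdealHom B J, if_neg hx, if_pos hy⟩

end PrimeIdeal

namespace LatticeEntails

variable {L B : Type*} [DecidableEq L] [Lattice B] [BoundedOrder B] [Fintype B] [DecidableEq B]

section Lattice

variable [Lattice L] [BoundedOrder L] {X Y : Finset (L × B)}

theorem of_latticeAxioms (h : LatticeAxioms L B X Y) : LatticeEntails L B X Y :=
  fun _ _ hA => hA X Y h

theorem bot_bot : LatticeEntails L B ∅ {(⊥, ⊥)} :=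
  of_latticeAxioms <| .inr <| .inr <| .inr <| .inl ⟨rfl, rfl⟩

theorem top_top : LatticeEntails L B ∅ {(⊤, ⊤)} :=
  of_latticeAxioms <| .inr <| .inr <| .inr <| .inr <| .inl ⟨rfl, rfl⟩

theorem pair_empty_of_ne (x : L) {a b : B} (hab : a ≠ b) :
    LatticeEntails L B {(x, a), (x, b)} ∅ :=
  of_latticeAxioms <| .inl ⟨x, a, b, hab, rfl, rfl⟩

theorem insert_left_of_ne {x : L} {a b : B} (hab : a ≠ b)
    (h : LatticeEntails L B X (insert (x, a) Y)) : LatticeEntails L B (insert (x, b) X) Y := by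
  intro E hE hA
  have hright : E (insert (x, b) X) (insert (x, a) Y) :=
    hE.mono (h E hE hA) (Finset.subset_insert _ _) subset_rfl
  have hleft : E (insert (x, a) (insert (x, b) X)) Y :=
    hE.mono (pair_empty_of_ne x hab E hE hA)
      (Finset.insert_subset_insert _ (Finset.singleton_subset_iff.2 (Finset.mem_insert_self _ _)))
      (Finset.empty_subset Y)
  exact hE.2.2 _ _ (x, a) hright hleft

theorem singleton_empty_of_ne {x : L} {a b : B} (hab : a ≠ b)
    (h : LatticeEntails L B ∅ {(x, a)}) : LatticeEntails L B {(x, b)} ∅ :=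
  insert_left_of_ne (X := ∅) (Y := ∅) hab h

theorem exists_mem_of_latticeAxioms (f : BoundedLatticeHom L B) (h : LatticeAxioms L B X Y)
    (hX : ∀ p ∈ X, f p.1 = p.2) : ∃ p ∈ Y, f p.1 = p.2 := by
  rcases h with ⟨x, a, b, hab, rfl, rfl⟩ | ⟨x, y, a, b, rfl, rfl⟩ | ⟨x, y, a, b, rfl, rfl⟩ |
    ⟨rfl, rfl⟩ | ⟨rfl, rfl⟩ | ⟨x, rfl, rfl⟩
  · obtain ⟨ha, hb⟩ : f x = a ∧ f x = b := by simpa using hX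
    exact absurd (ha.symm.trans hb) hab
  · obtain ⟨rfl, rfl⟩ : f x = a ∧ f y = b := by simpa using hX
    exact ⟨_, Finset.mem_singleton_self _, map_inf f x y⟩
  · obtain ⟨rfl, rfl⟩ : f x = a ∧ f y = b := by simpa using hX
    exact ⟨_, Finset.mem_singleton_self _, map_sup f x y⟩
  · exact ⟨_, Finset.mem_singleton_self _, map_bot f⟩
  · exact ⟨_, Finset.mem_singleton_self _, map_top f⟩
  · exact ⟨_, Finset.mem_image_of_mem _ (Finset.mem_univ (f x)), rfl⟩

theorem exists_mem (h : LatticeEntails L B X Y) (f : BoundedLatticeHom L B)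
    (hX : ∀ p ∈ X, f p.1 = p.2) : ∃ p ∈ Y, f p.1 = p.2 :=
  h _ (isEntailment_forall_imp_exists fun p => f p.1 = p.2)
    (fun _ _ => exists_mem_of_latticeAxioms f) hX

theorem map_ne_of_singleton_empty {x : L} {a : B} (h : LatticeEntails L B {(x, a)} ∅)
    (f : BoundedLatticeHom L B) : f x ≠ a := by
  intro hf
  obtain ⟨p, hp, -⟩ := h.exists_mem f (by simpa using hf)
  exact Finset.notMem_empty p hp

end Lattice

section DistribLattice

variable [DistribLattice L] [BoundedOrder L]

theorem eq_bot_of_singleton_top_empty {x : L} (h : LatticeEntails L B {(x, ⊤)} ∅) : x = ⊥ := by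
  by_contra hx
  obtain ⟨f, hfx, -⟩ := exists_boundedLatticeHom_eq_top_eq_bot (B := B) (mt le_bot_iff.1 hx)
  exact h.map_ne_of_singleton_empty f hfx

theorem eq_top_of_singleton_bot_empty {x : L} (h : LatticeEntails L B {(x, ⊥)} ∅) : x = ⊤ := by
  by_contra hx
  obtain ⟨f, -, hfx⟩ := exists_boundedLatticeHom_eq_top_eq_bot (B := B) (mt top_le_iff.1 hx)
  exact h.map_ne_of_singleton_empty f hfx

variable (B) [Nontrivial B]

theorem eq_bot_tfae (x : L) :
    [x = ⊥, LatticeEntails L B ∅ {(x, ⊥)}, LatticeEntails L B {(x, ⊤)} ∅].TFAE := by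
  tfae_have 1 → 2 := fun hx => hx ▸ bot_bot
  tfae_have 2 → 3 := singleton_empty_of_ne bot_ne_top
  tfae_have 3 → 1 := eq_bot_of_singleton_top_empty
  tfae_finish

theorem eq_top_tfae (x : L) :
    [x = ⊤, LatticeEntails L B ∅ {(x, ⊤)}, LatticeEntails L B {(x, ⊥)} ∅].TFAE := by
  tfae_have 1 → 2 := fun hx => hx ▸ top_top
  tfae_have 2 → 3 := singleton_empty_of_ne top_ne_bot
  tfae_have 3 → 1 := eq_top_of_singleton_bot_empty
  tfae_finish

end DistribLattice

end LatticeEntails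

theorem stmt11_general {L B : Type*} [DistribLattice L] [BoundedOrder L] [Lattice B]
    [BoundedOrder B] [Fintype B] [Nontrivial B] [DecidableEq L] [DecidableEq B] (x : L) :
    ((x = ⊥ ↔ LatticeEntails L B ∅ {(x, (⊥ : B))}) ∧
     (x = ⊥ ↔ LatticeEntails L B {(x, (⊤ : B))} ∅)) ∧
    ((x = ⊤ ↔ LatticeEntails L B ∅ {(x, (⊤ : B))}) ∧
     (x = ⊤ ↔ LatticeEntails L B {(x, (⊥ : B))} ∅)) :=
  ⟨⟨(LatticeEntails.eq_bot_tfae B x).out 0 1, (LatticeEntails.eq_bot_tfae B x).out 0 2⟩,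
    (LatticeEntails.eq_top_tfae B x).out 0 1, (LatticeEntails.eq_top_tfae B x).out 0 2⟩

theorem stmt11 {L B : Type*} [DistribLattice L] [BoundedOrder L] [BooleanAlgebra B]
    [Fintype B] [Nontrivial B] [DecidableEq L] [DecidableEq B] (x : L) :
    ((x = ⊥ ↔ LatticeEntails L B ∅ {(x, (⊥ : B))}) ∧
     (x = ⊥ ↔ LatticeEntails L B {(x, (⊤ : B))} ∅)) ∧
    ((x = ⊤ ↔ LatticeEntails L B ∅ {(x, (⊤ : B))}) ∧
     (x = ⊤ ↔ LatticeEntails L B {(x, (⊥ : B))} ∅)) :=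
  stmt11_general x
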